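/- Let n ≥ 1, let Ω be a nonempty open connected subset of ℝⁿ, and let u : Ω → ℝ be continuous with zero set Z_u = {x ∈ Ω : u(x) = 0}. Suppose there is an integer k ≥ 1 such that v(x) = (u(x))^k is locally Lipschitz on Ω. Then u is differentiable at almost every point of Ω ∖ Z_u. Moreover, if V : Ω → ℝ is a nonnegative measurable function with x ↦ V(x)ⁿ integrable on every compact subset of Ω, such that for almost every x ∈ Ω ∖ Z_u at which u is differentiable one has ‖fderiv u x‖ ≤ V(x)·|u(x)|, and if Z_u ≠ ∅, then u is identically 0 on Ω. -/

import Mathlib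

open MeasureTheory

/-!
Let `v = u ^ k` vanish at `x₀`. In polar coordinates around `x₀`, `s ^ (n - 1) * V ^ n` is
integrable along almost every ray, and there `k V ≤ 1 / (2 s) + (2 s) ^ (n - 1) * (k V) ^ n`. By
Grönwall's inequality `‖v‖` therefore grows at most by a factor `C * (R / r) ^ (1 / 2)` between the
radii `r` and `R`. Being Lipschitz, `‖v‖` is at most `L * r` at radius `r`, so letting `r` tend to
`0` shows that `v` vanishes at radius `R`. Hence the zero set of `v` is open in `Ω`, and it is
closed, so it is all of the connected set `Ω`.

The differentiability of `u` off its zero set follows from Rademacher's theorem for `v`, because the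
`k`-th power map has a differentiable local inverse at every nonzero point.
-/

open Filter Metric Set
open scoped NNReal Topology

section OneDimensional

variable {X Y F : Type*} [PseudoMetricSpace X] [PseudoMetricSpace Y]
  [NormedAddCommGroup F] [NormedSpace ℝ F] {a b c R : ℝ}

lemma absolutelyContinuousOnInterval_comp_of_lipschitzOnWith {f : X → Y} {g : ℝ → X} {K : ℝ≥0}
    {s : Set X} (hf : LipschitzOnWith K f s) (hg : AbsolutelyContinuousOnInterval g a b)
    (hgs : MapsTo g (uIcc a b) s) : AbsolutelyContinuousOnInterval (fun t ↦ f (g t)) a b := by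
  unfold AbsolutelyContinuousOnInterval at hg ⊢
  refine squeeze_zero' (.of_forall fun _ ↦ Finset.sum_nonneg fun _ _ ↦ dist_nonneg) ?_
    (by simpa using hg.const_mul (K : ℝ))
  rw [AbsolutelyContinuousOnInterval.totalLengthFilter, eventually_inf_principal]
  filter_upwards with I hI
  rw [Finset.mul_sum]
  gcongr with i hi
  exact hf.dist_le_mul _ (hgs (hI.1 i hi).1) _ (hgs (hI.1 i hi).2)

lemma le_mul_exp_integral_of_ae_deriv_le {f ψ : ℝ → ℝ} (hab : a ≤ b)
    (hf : AbsolutelyContinuousOnInterval f a b) (hψ : IntervalIntegrable ψ volume a b)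
    (h : ∀ᵐ s, s ∈ Icc a b → deriv f s ≤ ψ s * f s) :
    f b ≤ f a * Real.exp (∫ s in a..b, ψ s) := by
  let E : ℝ → ℝ := fun s ↦ Real.exp (-∫ t in a..s, ψ t)
  have hE : AbsolutelyContinuousOnInterval E a b := by
    have hΨ := (hψ.absolutelyContinuousOnInterval_intervalIntegral (c := a) left_mem_uIcc).fun_neg
    obtain ⟨K, hK⟩ := (Real.contDiff_exp (n := 1)).locallyLipschitz.locallyLipschitzOn
      |>.exists_lipschitzOnWith_of_compact (isCompact_uIcc.image_of_continuousOn hΨ.continuousOn)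
    exact absolutelyContinuousOnInterval_comp_of_lipschitzOnWith (f := Real.exp) hK hΨ
      (mapsTo_image _ _)
  have hfE : f b * E b ≤ f a * E a := by
    rw [← sub_nonpos, ← (hf.fun_mul hE).integral_deriv_eq_sub, intervalIntegral.integral_of_le hab]
    refine integral_nonpos_of_ae ((ae_restrict_iff' measurableSet_Ioc).2 ?_)
    filter_upwards [h, hf.ae_differentiableAt, hψ.ae_hasDerivAt_integral] with s hs hfs hψs hsI
    have hsab : s ∈ uIcc a b := by rw [uIcc_of_le hab]; exact Ioc_subset_Icc_self hsI
    have hEs : HasDerivAt E (E s * -ψ s) s := (hψs hsab a left_mem_uIcc).neg.exp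
    rw [((hfs hsab).hasDerivAt.fun_mul hEs).deriv]
    have : (deriv f s - ψ s * f s) * E s ≤ 0 :=
      mul_nonpos_of_nonpos_of_nonneg (sub_nonpos.2 (hs (Ioc_subset_Icc_self hsI)))
        (Real.exp_pos _).le
    simp only [Pi.zero_apply]
    linarith
  have hEa : E a = 1 := by simp [E]
  have hEb : E b * Real.exp (∫ s in a..b, ψ s) = 1 := by simp [E, ← Real.exp_add]
  calc f b = f b * E b * Real.exp (∫ s in a..b, ψ s) := by rw [mul_assoc, hEb, mul_one]
    _ ≤ f a * E a * Real.exp (∫ s in a..b, ψ s) := by gcongr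
    _ = f a * Real.exp (∫ s in a..b, ψ s) := by rw [hEa, mul_one]

lemma integral_div_id_of_pos (ha : 0 < a) (hb : 0 < b) :
    ∫ s in a..b, c / s = c * Real.log (b / a) := by
  simp [div_eq_mul_inv, integral_inv_of_pos ha hb]

lemma le_mul_div_rpow_mul_exp_integral_of_ae_deriv_le {f φ : ℝ → ℝ} (ha : 0 < a) (hab : a ≤ b)
    (hf : AbsolutelyContinuousOnInterval f a b) (hφ : IntervalIntegrable φ volume a b)
    (h : ∀ᵐ s, s ∈ Icc a b → deriv f s ≤ (c / s + φ s) * f s) :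
    f b ≤ f a * ((b / a) ^ c * Real.exp (∫ s in a..b, φ s)) := by
  have hb : 0 < b := ha.trans_le hab
  have hdiv : IntervalIntegrable (fun s ↦ c / s) volume a b :=
    (continuousOn_const.div continuousOn_id fun s hs ↦ by
      rw [uIcc_of_le hab] at hs
      exact (ha.trans_le hs.1).ne').intervalIntegrable
  have hexp : Real.exp (∫ s in a..b, c / s) = (b / a) ^ c := by
    rw [integral_div_id_of_pos ha hb, mul_comm, Real.rpow_def_of_pos (div_pos hb ha)]
  rw [← hexp, ← Real.exp_add, ← intervalIntegral.integral_add hdiv hφ]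
  exact le_mul_exp_integral_of_ae_deriv_le hab hf (hdiv.add hφ) h

lemma tendsto_intervalIntegral_nhdsGT_left {φ : ℝ → F} (hab : a < b)
    (hφ : IntervalIntegrable φ volume a b) :
    Tendsto (fun r ↦ ∫ s in r..b, φ s) (𝓝[>] a) (𝓝 (∫ s in a..b, φ s)) := by
  have hcont := intervalIntegral.continuousOn_primitive_interval_left
    ((intervalIntegrable_iff' (by simp)).1 hφ)
  rw [uIcc_of_le hab.le] at hcont
  exact (hcont a ⟨le_rfl, hab.le⟩).mono_of_mem_nhdsWithin (Icc_mem_nhdsGT hab)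

lemma nonpos_of_ae_deriv_le_div_add_mul {f φ : ℝ → ℝ} {L : ℝ} (hR : 0 < R) (hc : c < 1)
    (hf : ∀ r ∈ Ioo 0 R, AbsolutelyContinuousOnInterval f r R)
    (hfL : ∀ r ∈ Ioo 0 R, f r ≤ L * r) (hφ : IntervalIntegrable φ volume 0 R)
    (h : ∀ᵐ s, s ∈ Ioc 0 R → deriv f s ≤ (c / s + φ s) * f s) : f R ≤ 0 := by
  have hbound : ∀ r ∈ Ioo 0 R,
      f R ≤ L * r ^ (1 - c) * R ^ c * Real.exp (∫ s in r..R, φ s) := by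
    intro r hr
    have hφr : IntervalIntegrable φ volume r R :=
      hφ.mono_set (by rw [uIcc_of_le hr.2.le, uIcc_of_le hR.le]; exact Icc_subset_Icc_left hr.1.le)
    have hRr : 0 < R / r := div_pos hR hr.1
    calc f R ≤ f r * ((R / r) ^ c * Real.exp (∫ s in r..R, φ s)) :=
          le_mul_div_rpow_mul_exp_integral_of_ae_deriv_le hr.1 hr.2.le (hf r hr) hφr
            (h.mono fun s hs hsr ↦ hs ⟨hr.1.trans_le hsr.1, hsr.2⟩)
      _ ≤ L * r * ((R / r) ^ c * Real.exp (∫ s in r..R, φ s)) := by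
          gcongr
          exact hfL r hr
      _ = L * r ^ (1 - c) * R ^ c * Real.exp (∫ s in r..R, φ s) := by
          rw [Real.div_rpow hR.le hr.1.le, Real.rpow_sub hr.1, Real.rpow_one]
          ring
  have hlim : Tendsto (fun r ↦ L * r ^ (1 - c) * R ^ c * Real.exp (∫ s in r..R, φ s))
      (𝓝[>] 0) (𝓝 (L * 0 ^ (1 - c) * R ^ c * Real.exp (∫ s in 0..R, φ s))) := by
    have hpow : Tendsto (fun r : ℝ ↦ r ^ (1 - c)) (𝓝[>] 0) (𝓝 (0 ^ (1 - c))) :=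
      (Real.continuousAt_rpow_const _ _ (.inr (sub_pos.2 hc).le)).mono_left nhdsWithin_le_nhds
    exact ((hpow.const_mul L).mul_const (R ^ c)).mul
      (tendsto_intervalIntegral_nhdsGT_left hR hφ).rexp
  rw [Real.zero_rpow (sub_pos.2 hc).ne', mul_zero, zero_mul, zero_mul] at hlim
  refine ge_of_tendsto hlim ?_
  filter_upwards [Ioo_mem_nhdsGT hR] with r hr using hbound r hr

lemma norm_deriv_norm_le {g : ℝ → F} {s : ℝ} (hg : DifferentiableAt ℝ g s) :
    ‖deriv (fun t ↦ ‖g t‖) s‖ ≤ ‖deriv g s‖ := by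
  by_cases hn : DifferentiableAt ℝ (fun t ↦ ‖g t‖) s
  · refine le_of_tendsto_of_tendsto' hn.hasDerivAt.tendsto_slope.norm
      hg.hasDerivAt.tendsto_slope.norm fun t ↦ ?_
    rw [slope_def_module, slope_def_module, norm_smul, norm_smul]
    gcongr
    exact abs_norm_sub_norm_le _ _
  · simp [deriv_zero_of_not_differentiableAt hn]

lemma eq_zero_of_ae_norm_deriv_le_div_add_mul {g : ℝ → F} {φ : ℝ → ℝ} {L : ℝ≥0} (hR : 0 < R)
    (hc : c < 1) (hg : LipschitzOnWith L g (Icc 0 R)) (hg0 : g 0 = 0)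
    (hφ : IntervalIntegrable φ volume 0 R)
    (h : ∀ᵐ s, s ∈ Ioc 0 R → g s ≠ 0 →
      DifferentiableAt ℝ g s ∧ ‖deriv g s‖ ≤ (c / s + φ s) * ‖g s‖) :
    g R = 0 := by
  refine norm_le_zero_iff.1 (nonpos_of_ae_deriv_le_div_add_mul (f := fun s ↦ ‖g s‖) (L := L)
    hR hc (fun r hr ↦ ?_) (fun r hr ↦ ?_) hφ ?_)
  · refine LipschitzOnWith.absolutelyContinuousOnInterval (K := 1 * L) ?_
    rw [uIcc_of_le hr.2.le]
    exact lipschitzWith_one_norm.comp_lipschitzOnWith (hg.mono (Icc_subset_Icc_left hr.1.le))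
  · simpa [hg0, abs_of_pos hr.1] using
      hg.dist_le_mul r ⟨hr.1.le, hr.2.le⟩ 0 ⟨le_rfl, hR.le⟩
  · filter_upwards [h] with s hs hsR
    by_cases hgs : g s = 0
    · have hmin : IsLocalMin (fun t ↦ ‖g t‖) s := .of_forall fun t ↦ by simp [hgs]
      simp [hmin.deriv_eq_zero, hgs]
    · obtain ⟨hd, hle⟩ := hs hsR hgs
      exact (le_abs_self _).trans ((norm_deriv_norm_le hd).trans hle)

end OneDimensional

section PolarCoordinates

variable {E G : Type*} [NormedAddCommGroup E] [NormedSpace ℝ E]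
  [NormedAddCommGroup G] [NormedSpace ℝ G] [FiniteDimensional ℝ E]
  [MeasurableSpace E] [BorelSpace E] (μ : Measure E) [μ.IsAddHaarMeasure]

lemma ae_of_ae_volumeIoiPow {m : ℕ} {p : ℝ → Prop}
    (h : ∀ᵐ r : Ioi (0 : ℝ) ∂(Measure.volumeIoiPow m), p r) : ∀ᵐ r : ℝ, 0 < r → p r := by
  rw [Measure.volumeIoiPow, ae_withDensity_iff (by fun_prop)] at h
  have hvol : ∀ᵐ r : Ioi (0 : ℝ) ∂(Measure.comap Subtype.val volume), p r :=
    h.mono fun r hr ↦ hr (by simpa using pow_pos r.2 m)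
  exact (ae_restrict_iff' measurableSet_Ioi).1
    ((ae_restrict_iff_subtype (p := p) measurableSet_Ioi).2 hvol)

lemma ae_toSphere_ae_of_ae {p : E → Prop} (hp : ∀ᵐ x ∂μ, p x) (x₀ : E) :
    ∀ᵐ θ : sphere (0 : E) 1 ∂μ.toSphere, ∀ᵐ r : ℝ, 0 < r → p (x₀ + r • (θ : E)) := by
  have hp₀ : ∀ᵐ x ∂μ, p (x₀ + x) :=
    (measurePreserving_add_left μ x₀).quasiMeasurePreserving.ae hp
  have hpolar := (MeasurePreserving.symm (homeomorphUnitSphereProd E).toMeasurableEquiv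
    μ.measurePreserving_homeomorphUnitSphereProd).quasiMeasurePreserving.ae
      ((ae_restrict_iff_subtype (p := fun x ↦ p (x₀ + x)) (measurableSet_singleton _).compl).1
        (ae_restrict_of_ae hp₀))
  filter_upwards [Measure.ae_ae_of_ae_prod hpolar] with θ hθ
  exact ae_of_ae_volumeIoiPow (p := fun r ↦ p (x₀ + r • (θ : E))) (by simpa using hθ)

lemma ae_toSphere_integrableOn_pow_smul {f : E → G} (hf : Integrable f μ) (x₀ : E) :
    ∀ᵐ θ : sphere (0 : E) 1 ∂μ.toSphere, IntegrableOn
      (fun r : ℝ ↦ r ^ (Module.finrank ℝ E - 1) • f (x₀ + r • (θ : E))) (Ioi 0) := by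
  have hf₀ : Integrable (fun x ↦ f (x₀ + x)) μ := hf.comp_add_left x₀
  have hpolar := (MeasurePreserving.symm (homeomorphUnitSphereProd E).toMeasurableEquiv
    μ.measurePreserving_homeomorphUnitSphereProd).integrable_comp_of_integrable
      ((integrableOn_iff_comap_subtypeVal (measurableSet_singleton _).compl).1 hf₀.integrableOn)
  filter_upwards [hpolar.prod_right_ae] with θ hθ
  rw [Measure.volumeIoiPow, integrable_withDensity_iff_integrable_smul' (by fun_prop)
    (by simp)] at hθ
  rw [integrableOn_iff_comap_subtypeVal measurableSet_Ioi]
  refine hθ.congr (.of_forall fun ⟨r, hr⟩ ↦ ?_)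
  simp [ENNReal.toReal_ofReal (pow_pos hr _).le]

end PolarCoordinates

lemma le_div_add_div_pow_mul_pow {c s W : ℝ} (hc : 0 < c) (hs : 0 < s) (hW : 0 ≤ W) (m : ℕ) :
    W ≤ c / s + (s / c) ^ m * W ^ (m + 1) := by
  rcases le_total (W * s) c with h | h
  · exact ((le_div_iff₀ hs).2 h).trans (le_add_of_nonneg_right (by positivity))
  · have hone : 1 ≤ W * s / c := (one_le_div hc).2 h
    calc W ≤ W * (W * s / c) ^ m := le_mul_of_one_le_right hW (one_le_pow₀ hone)
      _ = (s / c) ^ m * W ^ (m + 1) := by rw [mul_div_assoc, mul_pow]; ring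
      _ ≤ c / s + (s / c) ^ m * W ^ (m + 1) := le_add_of_nonneg_left (by positivity)

section Ball

variable {E F : Type*} [NormedAddCommGroup E] [NormedSpace ℝ E]
  [NormedAddCommGroup F] [NormedSpace ℝ F]
  {R : ℝ} {v : E → F} {W : E → ℝ} {K : ℝ≥0} {x₀ : E}

lemma add_smul_mem_closedBall {θ : E} (hθ : ‖θ‖ = 1) {s : ℝ} (hs : s ∈ Icc 0 R) :
    x₀ + s • θ ∈ closedBall x₀ R := by
  simp [norm_smul, hθ, abs_of_nonneg hs.1, hs.2]

lemma eq_zero_of_ae_norm_fderiv_le_of_ray {θ : E} {m : ℕ} (hR : 0 < R) (hθ : ‖θ‖ = 1)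
    (hv : LipschitzOnWith K v (closedBall x₀ R)) (hv₀ : v x₀ = 0)
    (hW : IntegrableOn (fun s ↦ s ^ m * ‖W (x₀ + s • θ)‖ ^ (m + 1)) (Ioc 0 R))
    (h : ∀ᵐ s : ℝ, s ∈ Ioc 0 R → v (x₀ + s • θ) ≠ 0 → DifferentiableAt ℝ v (x₀ + s • θ) ∧
      ‖fderiv ℝ v (x₀ + s • θ)‖ ≤ W (x₀ + s • θ) * ‖v (x₀ + s • θ)‖) :
    v (x₀ + R • θ) = 0 := by
  have hline : LipschitzWith 1 (fun s : ℝ ↦ x₀ + s • θ) :=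
    LipschitzWith.of_dist_le_mul fun a b ↦ by simp [dist_eq_norm, ← sub_smul, norm_smul, hθ]
  refine eq_zero_of_ae_norm_deriv_le_div_add_mul (g := fun s ↦ v (x₀ + s • θ)) (c := 2⁻¹)
    (φ := fun s ↦ 2 ^ m * (s ^ m * ‖W (x₀ + s • θ)‖ ^ (m + 1))) hR (by norm_num)
    (hv.comp hline.lipschitzOnWith fun s ↦ add_smul_mem_closedBall hθ) (by simpa using hv₀)
    ((intervalIntegrable_iff_integrableOn_Ioc_of_le hR.le).2 (hW.const_mul _)) ?_
  filter_upwards [h] with s hs hsR hne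
  obtain ⟨hd, hle⟩ := hs hsR hne
  have hderiv : HasDerivAt (fun s ↦ v (x₀ + s • θ)) (fderiv ℝ v (x₀ + s • θ) θ) s :=
    hd.hasFDerivAt.comp_hasDerivAt s
      (by simpa using ((hasDerivAt_id s).smul_const θ).const_add x₀)
  refine ⟨hderiv.differentiableAt, ?_⟩
  calc ‖deriv (fun s ↦ v (x₀ + s • θ)) s‖ = ‖fderiv ℝ v (x₀ + s • θ) θ‖ := by rw [hderiv.deriv]
    _ ≤ ‖fderiv ℝ v (x₀ + s • θ)‖ := by
      simpa [hθ] using (fderiv ℝ v (x₀ + s • θ)).le_opNorm θ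
    _ ≤ ‖W (x₀ + s • θ)‖ * ‖v (x₀ + s • θ)‖ := hle.trans (by gcongr; exact Real.le_norm_self _)
    _ ≤ (2⁻¹ / s + 2 ^ m * (s ^ m * ‖W (x₀ + s • θ)‖ ^ (m + 1))) * ‖v (x₀ + s • θ)‖ := by
      gcongr
      refine (le_div_add_div_pow_mul_pow (c := 2⁻¹) (by norm_num) hsR.1
        (norm_nonneg _) m).trans_eq ?_
      rw [div_inv_eq_mul, mul_pow]
      ring

variable [FiniteDimensional ℝ E]
  [MeasurableSpace E] [BorelSpace E] (μ : Measure E) [μ.IsAddHaarMeasure]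

lemma ae_toSphere_eq_zero_of_ae_norm_fderiv_le [Nontrivial E] (hR : 0 < R)
    (hv : LipschitzOnWith K v (closedBall x₀ R)) (hv₀ : v x₀ = 0)
    (hW : IntegrableOn (fun x ↦ W x ^ Module.finrank ℝ E) (closedBall x₀ R) μ)
    (h : ∀ᵐ x ∂μ, x ∈ closedBall x₀ R → v x ≠ 0 →
      DifferentiableAt ℝ v x ∧ ‖fderiv ℝ v x‖ ≤ W x * ‖v x‖) :
    ∀ᵐ θ : sphere (0 : E) 1 ∂μ.toSphere, v (x₀ + R • (θ : E)) = 0 := by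
  have hWind := IntegrableOn.integrable_indicator hW.norm measurableSet_closedBall
  filter_upwards [ae_toSphere_ae_of_ae μ h x₀, ae_toSphere_integrableOn_pow_smul μ hWind x₀]
    with θ hθ hWθ
  have hmem {s : ℝ} (hs : s ∈ Ioc 0 R) : x₀ + s • (θ : E) ∈ closedBall x₀ R :=
    add_smul_mem_closedBall (by simp) (Ioc_subset_Icc_self hs)
  refine eq_zero_of_ae_norm_fderiv_le_of_ray (m := Module.finrank ℝ E - 1) hR (by simp) hv hv₀ ?_
    (hθ.mono fun s hs hsR ↦ hs hsR.1 (hmem hsR))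
  refine (hWθ.mono_set Ioc_subset_Ioi_self).congr_fun (fun s hs ↦ ?_) measurableSet_Ioc
  simp only [indicator_of_mem (hmem hs), norm_pow, smul_eq_mul,
    Nat.sub_add_cancel (Module.finrank_pos (R := ℝ) (M := E))]

lemma eqOn_zero_closedBall_of_ae_norm_fderiv_le
    (hv : LipschitzOnWith K v (closedBall x₀ R)) (hv₀ : v x₀ = 0)
    (hW : IntegrableOn (fun x ↦ W x ^ Module.finrank ℝ E) (closedBall x₀ R) μ)
    (h : ∀ᵐ x ∂μ, x ∈ closedBall x₀ R → v x ≠ 0 →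
      DifferentiableAt ℝ v x ∧ ‖fderiv ℝ v x‖ ≤ W x * ‖v x‖) :
    EqOn v 0 (closedBall x₀ R) := by
  intro x hx
  rcases eq_or_ne x x₀ with rfl | hne
  · exact hv₀
  have : Nontrivial E := ⟨x, x₀, hne⟩
  have hρ : 0 < ‖x - x₀‖ := norm_pos_iff.2 (sub_ne_zero.2 hne)
  have hsub : closedBall x₀ ‖x - x₀‖ ⊆ closedBall x₀ R :=
    closedBall_subset_closedBall (by simpa [dist_eq_norm] using hx)
  have hae := ae_toSphere_eq_zero_of_ae_norm_fderiv_le μ hρ (hv.mono hsub) hv₀ (hW.mono_set hsub)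
    (h.mono fun y hy hyx ↦ hy (hsub hyx))
  have hcont : Continuous fun θ : sphere (0 : E) 1 ↦ v (x₀ + ‖x - x₀‖ • (θ : E)) :=
    hv.continuousOn.comp_continuous (by fun_prop) fun θ ↦
      hsub (add_smul_mem_closedBall (by simp) ⟨hρ.le, le_rfl⟩)
  have hall := (hcont.ae_eq_iff_eq μ.toSphere continuous_const).1 hae
  simpa [smul_smul, hρ.ne'] using
    congrFun hall ⟨‖x - x₀‖⁻¹ • (x - x₀), by simp [norm_smul, hρ.ne']⟩

end Ball

section UniqueContinuation

lemma eqOn_const_of_isPreconnected {X Y : Type*} [TopologicalSpace X] [TopologicalSpace Y]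
    [T1Space Y] {f : X → Y} {s : Set X} {c : Y} {z : X} (hs : IsPreconnected s)
    (hf : ContinuousOn f s) (hloc : ∀ x ∈ s, f x = c → ∀ᶠ y in 𝓝[s] x, f y = c)
    (hz : z ∈ s) (hfz : f z = c) : EqOn f (fun _ ↦ c) s := by
  have : PreconnectedSpace s := Subtype.preconnectedSpace hs
  have hclopen : IsClopen {x : s | f x = c} :=
    ⟨isClosed_singleton.preimage hf.domRestrict, isOpen_iff_mem_nhds.2 fun x hx ↦
      nhds_subtype_eq_comap_nhdsWithin s x ▸ preimage_mem_comap (hloc x x.2 hx)⟩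
  have huniv := hclopen.eq_univ ⟨⟨z, hz⟩, hfz⟩
  exact fun x hx ↦ eq_univ_iff_forall.1 huniv ⟨x, hx⟩

variable {E F : Type*} [NormedAddCommGroup E] [NormedSpace ℝ E]
  [NormedAddCommGroup F] [NormedSpace ℝ F] [FiniteDimensional ℝ E]
  [MeasurableSpace E] [BorelSpace E] (μ : Measure E) [μ.IsAddHaarMeasure] {Ω : Set E}

theorem eqOn_zero_of_ae_norm_fderiv_le {v : E → F} {W : E → ℝ} {z : E} (hΩ : IsOpen Ω)
    (hΩ' : IsPreconnected Ω) (hv : LocallyLipschitzOn Ω v)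
    (hW : LocallyIntegrableOn (fun x ↦ W x ^ Module.finrank ℝ E) Ω μ)
    (h : ∀ᵐ x ∂μ, x ∈ Ω → v x ≠ 0 → DifferentiableAt ℝ v x ∧ ‖fderiv ℝ v x‖ ≤ W x * ‖v x‖)
    (hz : z ∈ Ω) (hvz : v z = 0) : EqOn v 0 Ω := by
  refine eqOn_const_of_isPreconnected hΩ' hv.continuousOn (fun x hx hvx ↦ ?_) hz hvz
  obtain ⟨R, hR, hRΩ⟩ := nhds_basis_closedBall.mem_iff.1 (hΩ.mem_nhds hx)
  obtain ⟨K, hK⟩ := (hv.mono hRΩ).exists_lipschitzOnWith_of_compact (isCompact_closedBall x R)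
  have hball := eqOn_zero_closedBall_of_ae_norm_fderiv_le μ hK hvx
    (hW.integrableOn_compact_subset hRΩ (isCompact_closedBall x R))
    (h.mono fun y hy hyR ↦ hy (hRΩ hyR))
  exact mem_nhdsWithin_of_mem_nhds (mem_of_superset (closedBall_mem_nhds x hR) hball)

theorem ae_differentiableWithinAt_of_locallyLipschitzOn [FiniteDimensional ℝ F] {f : E → F}
    {s : Set E} (hf : LocallyLipschitzOn s f) :
    ∀ᵐ x ∂μ, x ∈ s → DifferentiableWithinAt ℝ f s x := by
  refine measure_null_of_locally_null _ fun x hx ↦ ?_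
  obtain ⟨K, t, ht, hK⟩ := hf (Classical.not_imp.1 hx).1
  obtain ⟨U, hU, hxU, hUt⟩ := mem_nhdsWithin.1 ht
  refine ⟨_, inter_mem_nhdsWithin _ (hU.mem_nhds hxU), measure_mono_null ?_
    ((hK.mono hUt).ae_differentiableWithinAt_of_mem (μ := μ))⟩
  rintro y ⟨hy, hyU⟩ hyt
  obtain ⟨hys, hyf⟩ := Classical.not_imp.1 hy
  exact hyf ((differentiableWithinAt_inter' (mem_nhdsWithin_of_mem_nhds (hU.mem_nhds hyU))).1
    (inter_comm U s ▸ hyt ⟨hyU, hys⟩))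

end UniqueContinuation

section Roots

lemma differentiableAt_of_comp_of_hasStrictFDerivAt {𝕂 E F G : Type*} [NontriviallyNormedField 𝕂]
    [NormedAddCommGroup E] [NormedSpace 𝕂 E] [NormedAddCommGroup F] [NormedSpace 𝕂 F]
    [CompleteSpace F] [NormedAddCommGroup G] [NormedSpace 𝕂 G] {f : F → G} {f' : F ≃L[𝕂] G}
    {u : E → F} {x : E} (hf : HasStrictFDerivAt f (f' : F →L[𝕂] G) (u x))
    (hu : ContinuousAt u x) (h : DifferentiableAt 𝕂 (f ∘ u) x) : DifferentiableAt 𝕂 u x := by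
  have hinv : DifferentiableAt 𝕂 (hf.localInverse f f' (u x)) ((f ∘ u) x) :=
    hf.to_localInverse.hasFDerivAt.differentiableAt
  refine (hinv.comp x h).congr_of_eventuallyEq ?_
  filter_upwards [hu.eventually hf.eventually_left_inverse] with y hy using hy.symm

variable {E 𝕜 : Type*} [NormedAddCommGroup E] [NormedSpace ℝ E] [RCLike 𝕜]
  {u : E → 𝕜} {x : E} {k : ℕ}

lemma differentiableAt_of_pow (hk : k ≠ 0) (hu : ContinuousAt u x) (hux : u x ≠ 0)
    (h : DifferentiableAt ℝ (fun y ↦ u y ^ k) x) : DifferentiableAt ℝ u x := by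
  have hderiv : (k : 𝕜) * u x ^ (k - 1) ≠ 0 :=
    mul_ne_zero (Nat.cast_ne_zero.2 hk) (pow_ne_zero _ hux)
  have hpow := ((hasStrictDerivAt_pow k (u x)).hasStrictFDerivAt_equiv hderiv).restrictScalars ℝ
  exact differentiableAt_of_comp_of_hasStrictFDerivAt
    (f' := (ContinuousLinearEquiv.unitsEquivAut 𝕜 (Units.mk0 _ hderiv)).restrictScalars ℝ)
    hpow hu h

lemma norm_fderiv_pow (hu : DifferentiableAt ℝ u x) :
    ‖fderiv ℝ (fun y ↦ u y ^ k) x‖ = k * ‖u x‖ ^ (k - 1) * ‖fderiv ℝ u x‖ := by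
  rw [fderiv_fun_pow _ hu, norm_smul]
  simp

lemma norm_fderiv_pow_le (hk : k ≠ 0) {c : ℝ} (hu : DifferentiableAt ℝ u x)
    (h : ‖fderiv ℝ u x‖ ≤ c * ‖u x‖) :
    ‖fderiv ℝ (fun y ↦ u y ^ k) x‖ ≤ k * c * ‖u x ^ k‖ := by
  calc ‖fderiv ℝ (fun y ↦ u y ^ k) x‖ ≤ k * ‖u x‖ ^ (k - 1) * (c * ‖u x‖) := by
        rw [norm_fderiv_pow hu]; gcongr
    _ = k * c * ‖u x ^ k‖ := by rw [norm_pow, ← pow_sub_one_mul hk ‖u x‖]; ring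

variable [FiniteDimensional ℝ E]
  [MeasurableSpace E] [BorelSpace E] (μ : Measure E) [μ.IsAddHaarMeasure] {Ω : Set E}

theorem ae_differentiableAt_of_locallyLipschitzOn_pow (hΩ : IsOpen Ω) (hu : ContinuousOn u Ω)
    (hk : k ≠ 0) (hv : LocallyLipschitzOn Ω fun x ↦ u x ^ k) :
    ∀ᵐ x ∂μ, x ∈ Ω → u x ≠ 0 → DifferentiableAt ℝ u x := by
  filter_upwards [ae_differentiableWithinAt_of_locallyLipschitzOn μ hv] with x hx hxΩ hux
  have hΩx := hΩ.mem_nhds hxΩ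
  exact differentiableAt_of_pow hk (hu.continuousAt hΩx) hux ((hx hxΩ).differentiableAt hΩx)

theorem kth_root_unique_continuation_general (hΩ : IsOpen Ω) (hΩ' : IsPreconnected Ω)
    (hu : ContinuousOn u Ω) (hk : k ≠ 0) (hv : LocallyLipschitzOn Ω fun x ↦ u x ^ k) :
    (∀ᵐ x ∂μ, x ∈ Ω → u x ≠ 0 → DifferentiableAt ℝ u x) ∧
    ∀ V : E → ℝ, LocallyIntegrableOn (fun x ↦ V x ^ Module.finrank ℝ E) Ω μ →
      (∀ᵐ x ∂μ, x ∈ Ω → u x ≠ 0 → DifferentiableAt ℝ u x → ‖fderiv ℝ u x‖ ≤ V x * ‖u x‖) →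
      (∃ z ∈ Ω, u z = 0) → EqOn u 0 Ω := by
  have hdiff := ae_differentiableAt_of_locallyLipschitzOn_pow μ hΩ hu hk hv
  refine ⟨hdiff, fun V hV hgrad ⟨z, hz, huz⟩ ↦ ?_⟩
  have hkV : LocallyIntegrableOn (fun x ↦ (k * V x) ^ Module.finrank ℝ E) Ω μ := by
    simp only [mul_pow]
    exact hV.smul ((k : ℝ) ^ Module.finrank ℝ E)
  have hgrad' : ∀ᵐ x ∂μ, x ∈ Ω → u x ^ k ≠ 0 → DifferentiableAt ℝ (fun y ↦ u y ^ k) x ∧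
      ‖fderiv ℝ (fun y ↦ u y ^ k) x‖ ≤ k * V x * ‖u x ^ k‖ := by
    filter_upwards [hdiff, hgrad] with x hdx hgx hxΩ hne
    have hux : u x ≠ 0 := (pow_ne_zero_iff hk).1 hne
    have hd := hdx hxΩ hux
    exact ⟨hd.fun_pow k, norm_fderiv_pow_le hk hd (hgx hxΩ hux hd)⟩
  have hzero := eqOn_zero_of_ae_norm_fderiv_le μ hΩ hΩ' hv hkV hgrad' hz (by simp [huz, hk])
  exact fun x hx ↦ (pow_eq_zero_iff hk).1 (hzero hx)

end Roots

/-- Corollary 3.8: if `u` is a continuous `k`-th root of a locally Lipschitz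
function on a domain `Ω ⊆ ℝⁿ`, then `u` is differentiable a.e. on `Ω ∖ Z_u`;
moreover if `|∇u| ≤ V|u|` a.e. on `Ω ∖ Z_u` with `V ≥ 0` measurable and `Vⁿ`
locally integrable, and `Z_u ≠ ∅`, then `u ≡ 0` on `Ω`. -/
theorem kth_root_unique_continuation (n : ℕ) (hn : 1 ≤ n)
    (Ω : Set (EuclideanSpace ℝ (Fin n))) (hΩopen : IsOpen Ω) (hΩconn : IsConnected Ω)
    (u : EuclideanSpace ℝ (Fin n) → ℝ) (hu : ContinuousOn u Ω)
    (k : ℕ) (hk : 1 ≤ k)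
    (hvLip : ∀ x ∈ Ω, ∃ (K : NNReal) (t : Set (EuclideanSpace ℝ (Fin n))),
      t ∈ nhds x ∧ t ⊆ Ω ∧ LipschitzOnWith K (fun y => (u y) ^ k) t) :
    (∀ᵐ x, x ∈ Ω \ {y ∈ Ω | u y = 0} → DifferentiableAt ℝ u x) ∧
    (∀ V : EuclideanSpace ℝ (Fin n) → ℝ,
      (∀ x ∈ Ω, 0 ≤ V x) → Measurable V →
      (∀ K : Set (EuclideanSpace ℝ (Fin n)), K ⊆ Ω → IsCompact K →
        IntegrableOn (fun x => V x ^ n) K volume) →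
      (∀ᵐ x, x ∈ Ω \ {y ∈ Ω | u y = 0} → DifferentiableAt ℝ u x →
        ‖fderiv ℝ u x‖ ≤ V x * |u x|) →
      {y ∈ Ω | u y = 0} ≠ ∅ →
      ∀ x ∈ Ω, u x = 0) := by
  have hv : LocallyLipschitzOn Ω fun x ↦ u x ^ k := fun x hx ↦
    let ⟨K, t, ht, _, hK⟩ := hvLip x hx
    ⟨K, t, mem_nhdsWithin_of_mem_nhds ht, hK⟩
  obtain ⟨hdiff, hzero⟩ := kth_root_unique_continuation_general volume hΩopen
    hΩconn.isPreconnected hu (Nat.one_le_iff_ne_zero.1 hk) hv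
  refine ⟨hdiff.mono fun x hx hxΩ ↦ hx hxΩ.1 fun h ↦ hxΩ.2 ⟨hxΩ.1, h⟩,
    fun V _ _ hV hgrad hZ ↦ hzero V ?_ ?_ (nonempty_iff_ne_empty.2 hZ)⟩
  · simpa [locallyIntegrableOn_iff hΩopen.isLocallyClosed] using hV
  · exact hgrad.mono fun x hx hxΩ hux ↦ hx ⟨hxΩ, fun h ↦ hux h.2⟩
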